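/- The bidirectional type system is not closed under substitution: there exist a context Γ, a variable x, terms a and b, and types A and B such that Γ, x:A ⊢ b ⇐ B and Γ ⊢ a ⇐ A, but it is not the case that Γ ⊢ b[a/x] ⇐ B. (For instance, take Γ = z:Type, A = (y:Type) → Type, a = λy.y, b = x z, B = Type: then b[a/x] = (λy.y) z is an application whose head is a λ-abstraction, which is neither inferable nor checkable.) -/

import Mathlib

/-- Terms of the core pi-forall language, with de Bruijn indices for variables.
    `lam a` binds one variable in `a`, and `pi A B` binds one variable in `B`.
    (De Bruijn representation identifies terms up to α-equivalence.) -/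
inductive Tm : Type
  | var : Nat → Tm
  | lam : Tm → Tm
  | app : Tm → Tm → Tm
  | pi  : Tm → Tm → Tm
  | type : Tm
  | annot : Tm → Tm → Tm
  deriving DecidableEq

namespace Tm

/-- `lift d c t` shifts by `d` every variable of `t` whose index is at least `c`. -/
def lift (d c : Nat) : Tm → Tm
  | var k => if k < c then var k else var (k + d)
  | lam a => lam (lift d (c + 1) a)
  | app a b => app (lift d c a) (lift d c b)
  | pi A B => pi (lift d c A) (lift d (c + 1) B)
  | type => type
  | annot a A => annot (lift d c a) (lift d c A)

/-- `subst a x b` is the capture-avoiding substitution `b[a/x]` of `a`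
    for variable `x` in `b` (indices above `x` are decremented). -/
def subst (a : Tm) (x : Nat) : Tm → Tm
  | var k => if k = x then lift x 0 a else if x < k then var (k - 1) else var k
  | lam b => lam (subst a (x + 1) b)
  | app b c => app (subst a x b) (subst a x c)
  | pi A B => pi (subst a x A) (subst a (x + 1) B)
  | type => type
  | annot b A => annot (subst a x b) (subst a x A)

end Tm

/-- A typing context is a list of types; the head is the type of variable 0. -/
abbrev Ctx := List Tm

/-- `lookupTy Γ x = some A` means `x : A ∈ Γ` (with the type suitably shifted
    so that it is well-scoped in the whole context `Γ`). -/
def lookupTy : Ctx → Nat → Option Tm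
  | [], _ => none
  | A :: _, 0 => some (Tm.lift 1 0 A)
  | _ :: Γ, k + 1 => (lookupTy Γ k).map (Tm.lift 1 0)

mutual
/-- The bidirectional inference judgment `Γ ⊢ a ⇒ A`. -/
inductive Infers : Ctx → Tm → Tm → Prop
  | var {Γ x A} : lookupTy Γ x = some A → Infers Γ (.var x) A
  | type {Γ} : Infers Γ .type .type
  | pi {Γ A B} : Checks Γ A .type → Checks (A :: Γ) B .type →
      Infers Γ (.pi A B) .type
  | app {Γ a b A B} : Infers Γ a (.pi A B) → Checks Γ b A →
      Infers Γ (.app a b) (Tm.subst b 0 B)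
  | annot {Γ a A} : Checks Γ A .type → Checks Γ a A →
      Infers Γ (.annot a A) A

/-- The bidirectional checking judgment `Γ ⊢ a ⇐ A`. -/
inductive Checks : Ctx → Tm → Tm → Prop
  | lam {Γ A a B} : Checks (A :: Γ) a B → Checks Γ (.lam a) (.pi A B)
  | infer {Γ a A} : (∀ b, a ≠ .lam b) → Infers Γ a A → Checks Γ a A
end

/-- The bidirectional type system is not closed under substitution:
    there are `Γ`, `a`, `b`, `A`, `B` with `Γ, x:A ⊢ b ⇐ B` (here `x` is
    de Bruijn variable 0, and `B`, which does not mention `x`, is weakened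
    accordingly) and `Γ ⊢ a ⇐ A`, but not `Γ ⊢ b[a/x] ⇐ B`. -/
theorem bidir_not_closed_under_subst :
    ∃ (Γ : Ctx) (a b A B : Tm),
      Checks (A :: Γ) b (Tm.lift 1 0 B) ∧ Checks Γ a A ∧
      ¬ Checks Γ (Tm.subst a 0 b) B := by
  -- `Γ = z:Type`, `a = λy.y`, `b = x z`, `A = (y:Type) → Type`, `B = Type`; then `b[a/x]` is
  -- `(λy.y) z`, and no inference rule applies to its head.
  refine ⟨[.type], .lam (.var 0), .app (.var 0) (.var 1), .pi .type .type, .type, ?_, ?_, ?_⟩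
  · refine .infer (fun _ => Tm.noConfusion) ?_
    exact Infers.app (A := .type) (B := .type) (.var rfl)
      (.infer (fun _ => Tm.noConfusion) (.var rfl))
  · exact .lam (.infer (fun _ => Tm.noConfusion) (.var rfl))
  · intro h
    change Checks _ (.app (.lam (.var 0)) (.var 0)) _ at h
    generalize hT : Tm.type = T at h
    cases h with
    | infer _ h =>
      cases h with
      | app h _ => cases h
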